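/- arXiv:1901.09336 — 2 statements merged into one kernel-verified Lean document; each statement's English description precedes it below -/
import Mathlib

section
/- Let V be a real Hilbert space, K a non-empty closed convex subset of V, and J : V → ℝ a convex continuous function which is infinite at infinity on K, i.e. for every sequence (uⁿ) in K with ‖uⁿ‖ → ∞ one has J(uⁿ) → ∞. Then there exists a minimizer of J on K. -/
open Filter Topology

/-!
The sublevel sets `{x ∈ K | J x ≤ c}` are closed and convex, and bounded because `J` is infinite at
infinity on `K`. In a Hilbert space a decreasing sequence of non-empty bounded closed convex sets
has a common point (`exists_mem_of_antitone_closed_convex`). Levels `c = -n` show that `J` is bounded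
below on `K`; levels `c = inf J + 1 / (n + 1)` then produce a minimizer.
-/

/-- The elements of minimal norm of the sets `C n` form a Cauchy sequence, whose limit lies in
every `C n`. -/
lemma exists_mem_of_antitone_closed_convex
    {V : Type*} [NormedAddCommGroup V] [InnerProductSpace ℝ V] [CompleteSpace V]
    (C : ℕ → Set V) (hanti : Antitone C) (hne : ∀ n, (C n).Nonempty)
    (hcl : ∀ n, IsClosed (C n)) (hconv : ∀ n, Convex ℝ (C n))
    (R : ℝ) (hR : ∀ x ∈ C 0, ‖x‖ ≤ R) : ∃ x, ∀ n, x ∈ C n := by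
  have hmin : ∀ n, ∃ v ∈ C n, ∀ w ∈ C n, inner ℝ ((0 : V) - v) (w - v) ≤ 0 := by
    intro n
    obtain ⟨v, hv, h⟩ :=
      exists_norm_eq_iInf_of_complete_convex (hne n) (hcl n).isComplete (hconv n) 0
    exact ⟨v, hv, (norm_eq_iInf_iff_real_inner_le_zero (hconv n) hv).1 h⟩
  choose x hxC hx using hmin
  have key : ∀ n m, n ≤ m → ‖x m - x n‖ ^ 2 ≤ ‖x m‖ ^ 2 - ‖x n‖ ^ 2 := by
    intro n m hnm
    have h1 := hx n (x m) (hanti hnm (hxC m))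
    have h2 := norm_add_sq_real (x n) (x m - x n)
    rw [add_sub_cancel] at h2
    rw [zero_sub, inner_neg_left] at h1
    linarith
  have hmono : Monotone fun n => ‖x n‖ ^ 2 := fun n m hnm => by
    have := key n m hnm
    have := sq_nonneg ‖x m - x n‖
    dsimp only
    linarith
  have hbdd : BddAbove (Set.range fun n => ‖x n‖ ^ 2) := by
    refine ⟨R ^ 2, ?_⟩
    rintro _ ⟨n, rfl⟩
    exact pow_le_pow_left₀ (norm_nonneg _) (hR _ (hanti (Nat.zero_le n) (hxC n))) 2
  have hlim := tendsto_atTop_ciSup hmono hbdd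
  have hcauchy : CauchySeq x := by
    rw [Metric.cauchySeq_iff']
    intro ε hε
    obtain ⟨N, hN⟩ := Metric.cauchySeq_iff'.1 hlim.cauchySeq (ε ^ 2) (by positivity)
    refine ⟨N, fun n hn => ?_⟩
    have h1 := hN n hn
    rw [Real.dist_eq] at h1
    have h2 := (le_abs_self _).trans_lt h1
    rw [dist_eq_norm]
    exact lt_of_pow_lt_pow_left₀ 2 hε.le ((key N n hn).trans_lt h2)
  obtain ⟨y, hy⟩ := cauchySeq_tendsto_of_complete hcauchy
  refine ⟨y, fun n => (hcl n).mem_of_tendsto hy ?_⟩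
  filter_upwards [eventually_ge_atTop n] with m hm
  exact hanti hm (hxC m)

/-- **Existence of a minimizer in a Hilbert space.** Let `K` be a non-empty closed
convex subset of a real Hilbert space `V` and `J : V → ℝ` a convex continuous
function which is infinite at infinity on `K`. Then `J` attains its minimum on `K`. -/
theorem existence_of_minimizer_hilbert
    {V : Type*} [NormedAddCommGroup V] [InnerProductSpace ℝ V] [CompleteSpace V]
    (K : Set V) (hK : K.Nonempty) (hKc : IsClosed K) (hKconv : Convex ℝ K)
    (J : V → ℝ) (hJc : Continuous J) (hJconv : ConvexOn ℝ Set.univ J)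
    (hinf : ∀ u : ℕ → V, (∀ n, u n ∈ K) →
      Tendsto (fun n => ‖u n‖) atTop atTop → Tendsto (fun n => J (u n)) atTop atTop) :
    ∃ x ∈ K, ∀ y ∈ K, J x ≤ J y := by
  have hbounded : ∀ c : ℝ, ∃ R : ℝ, ∀ x ∈ K ∩ {x | J x ≤ c}, ‖x‖ ≤ R := by
    intro c
    by_contra! h
    choose u hu hun using fun n : ℕ => h n
    have h1 := hinf u (fun n => (hu n).1)
      (tendsto_atTop_mono (fun n => (hun n).le) tendsto_natCast_atTop_atTop)
    obtain ⟨n, hn⟩ := (h1.eventually_gt_atTop c).exists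
    exact absurd (hu n).2 (not_le.2 hn)
  have hcommon : ∀ a : ℕ → ℝ, Antitone a → (∀ n, ∃ x ∈ K, J x ≤ a n) →
      ∃ x ∈ K, ∀ n, J x ≤ a n := by
    intro a ha hne
    obtain ⟨R, hR⟩ := hbounded (a 0)
    obtain ⟨x, hx⟩ := exists_mem_of_antitone_closed_convex (fun n => K ∩ {x | J x ≤ a n})
      (fun n m hnm x hx => ⟨hx.1, le_trans hx.2 (ha hnm)⟩) hne
      (fun n => hKc.inter (isClosed_le hJc continuous_const))
      (fun n => hKconv.inter (by simpa using hJconv.convex_le (a n))) R hR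
    exact ⟨x, (hx 0).1, fun n => (hx n).2⟩
  have hbelow : BddBelow (J '' K) := by
    by_contra h
    obtain ⟨x, -, hx⟩ := hcommon (fun n => -(n : ℝ))
      (fun n m hnm => neg_le_neg (Nat.cast_le.2 hnm)) (fun n => by
        obtain ⟨_, ⟨x, hx, rfl⟩, hlt⟩ := not_bddBelow_iff.1 h (-(n : ℝ))
        exact ⟨x, hx, hlt.le⟩)
    obtain ⟨n, hn⟩ := exists_nat_gt (-J x)
    linarith [hx n]
  obtain ⟨x, hxK, hx⟩ := hcommon (fun n => sInf (J '' K) + 1 / ((n : ℝ) + 1))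
    (fun n m hnm => add_le_add_right (Nat.one_div_le_one_div hnm) _) (fun n => by
      obtain ⟨_, ⟨x, hx, rfl⟩, hlt⟩ := exists_lt_of_csInf_lt (hK.image J)
        (lt_add_of_pos_right (sInf (J '' K)) (Nat.one_div_pos_of_nat (n := n)))
      exact ⟨x, hx, hlt.le⟩)
  refine ⟨x, hxK, fun y hy => le_trans ?_ (csInf_le hbelow ⟨y, hy, rfl⟩)⟩
  have hlim := (tendsto_one_div_add_atTop_nhds_zero_nat (𝕜 := ℝ)).const_add (sInf (J '' K))
  rw [add_zero] at hlim
  exact ge_of_tendsto' hlim hx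
end

section
/- Let V be a real Banach space, J : V → ℝ and F = (F₁, …, F_M) : V → ℝ^M continuously (Fréchet) differentiable in a neighborhood of a point u with F(u) ≤ 0. Suppose the constraints are qualified at u, i.e. the derivatives Fᵢ'(u) for the active indices i ∈ I(u) = {i : Fᵢ(u) = 0} are linearly independent in V'. If u is a local minimizer of J on {v : F(v) ≤ 0}, then there exist Lagrange multipliers λ₁, …, λ_M ≥ 0 such that J'(u) + Σᵢ λᵢ Fᵢ'(u) = 0 and λᵢ = 0 for every i with Fᵢ(u) < 0. -/
open Filter Topology

/-!
Linear independence of the finitely many active derivatives `Fᵢ'(u)` provides vectors `eⱼ` dual to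
them: `Fᵢ'(u) eⱼ = δᵢⱼ` (`exists_dual_vectors`). These make the constraint set easy to probe along
straight lines, so no implicit function theorem is needed.

If `Fᵢ'(u) w < 0` for every active `i`, then `u + t w` is feasible for small `t > 0`, whence
`J'(u) w ≥ 0`. If only `Fᵢ'(u) w ≤ 0`, the same conclusion follows by applying this to
`w - ε ∑ⱼ eⱼ` and letting `ε → 0`. In particular `J'(u)` vanishes on the common kernel of the active
derivatives, so applying it to `v - ∑ᵢ Fᵢ'(u)(v) eᵢ` gives `J'(u) = ∑ᵢ J'(u)(eᵢ) Fᵢ'(u)`. The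
multipliers are thus `λᵢ = J'(u)(-eᵢ)`, nonnegative because `-eᵢ` is an admissible direction.
-/

/-- A function strictly decreases, for small positive times, along any direction in which its
derivative is negative. -/
lemma eventually_lt_of_fderiv_neg {V : Type*} [NormedAddCommGroup V] [NormedSpace ℝ V]
    {f : V → ℝ} {f' : V →L[ℝ] ℝ} {u w : V} (hf : HasFDerivAt f f' u) (hw : f' w < 0) :
    ∀ᶠ t : ℝ in 𝓝[>] 0, f (u + t • w) < f u := by
  have h := (hf.hasLineDerivAt w).tendsto_slope_zero_right
  filter_upwards [h.eventually_lt_const hw, self_mem_nhdsWithin] with t ht ht0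
  have ht0 : 0 < t := ht0
  rw [smul_eq_mul] at ht
  have := neg_of_mul_neg_right ht (inv_pos.2 ht0).le
  linarith

/-- A finite linearly independent family of continuous linear forms has a dual family of vectors:
`f j` is not in the span of the other forms, so some vector in their common kernel is not killed
by `f j`, and it can be rescaled. -/
lemma exists_dual_vectors {V : Type*} [NormedAddCommGroup V] [NormedSpace ℝ V]
    {ι : Type*} [Finite ι] [DecidableEq ι] {f : ι → V →L[ℝ] ℝ} (hf : LinearIndependent ℝ f) :
    ∃ e : ι → V, ∀ i j, f i (e j) = if i = j then 1 else 0 := by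
  have hf' : LinearIndependent ℝ (fun i => (f i : V →ₗ[ℝ] ℝ)) :=
    hf.map' (ContinuousLinearMap.coeLM ℝ)
      (LinearMap.ker_eq_bot.2 ContinuousLinearMap.coe_injective)
  have key : ∀ j, ∃ x : V, ∀ i, f i x = if i = j then 1 else 0 := by
    intro j
    have hj := linearIndependent_iff_notMem_span.1 hf' j
    have hx : ∃ x : V, (∀ i, i ≠ j → f i x = 0) ∧ f j x ≠ 0 := by
      by_contra! hcon
      apply hj
      have := mem_span_of_iInf_ker_le_ker (L := fun i : {i // i ≠ j} => (f i : V →ₗ[ℝ] ℝ))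
        (K := (f j : V →ₗ[ℝ] ℝ)) (fun x hx => by
          simp only [Submodule.mem_iInf, LinearMap.mem_ker] at hx ⊢
          exact hcon x fun i hi => hx ⟨i, hi⟩)
      refine Submodule.span_mono ?_ this
      rintro _ ⟨i, rfl⟩
      exact ⟨i, ⟨trivial, i.2⟩, rfl⟩
    obtain ⟨x, hx0, hx1⟩ := hx
    refine ⟨(f j x)⁻¹ • x, fun i => ?_⟩
    split_ifs with h
    · subst h
      simp [hx1]
    · simp [hx0 i h]
  choose e he using key
  exact ⟨e, fun i j => he j i⟩

/-- **Stationarity of the Lagrangian (inequality constraints, KKT).** Let `J`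
and `F = (F₁,…,F_M)` be continuously differentiable in a neighborhood `U` of
`u` with `F(u) ≤ 0`, and assume the constraints are qualified at `u` (the
derivatives of the active constraints are linearly independent). If `u` is a
local minimizer of `J` on `{v : F(v) ≤ 0}`, then there exist Lagrange
multipliers `λᵢ ≥ 0` with `J'(u) + Σᵢ λᵢ Fᵢ'(u) = 0` and `λᵢ = 0` whenever
`Fᵢ(u) < 0`. -/
theorem lagrange_multipliers_inequality
    {V : Type*} [NormedAddCommGroup V] [NormedSpace ℝ V] [CompleteSpace V]
    {M : ℕ} (J : V → ℝ) (F : Fin M → V → ℝ) (u : V)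
    (U : Set V) (hU : U ∈ 𝓝 u)
    (J' : V → V →L[ℝ] ℝ) (F' : Fin M → V → V →L[ℝ] ℝ)
    (hJd : ∀ x ∈ U, HasFDerivAt J (J' x) x) (hJc : ContinuousOn J' U)
    (hFd : ∀ i, ∀ x ∈ U, HasFDerivAt (F i) (F' i x) x)
    (hFc : ∀ i, ContinuousOn (F' i) U)
    (hFu : ∀ i, F i u ≤ 0)
    (hqual : LinearIndependent ℝ (fun i : {i : Fin M // F i u = 0} => F' i u))
    (hmin : ∃ δ > 0, ∀ v : V, (∀ i, F i v ≤ 0) → ‖v - u‖ < δ → J u ≤ J v) :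
    ∃ lam : Fin M → ℝ, (∀ i, 0 ≤ lam i) ∧
      (J' u + ∑ i, lam i • F' i u = 0) ∧
      (∀ i, F i u < 0 → lam i = 0) := by
  obtain ⟨δ, hδ, hmin⟩ := hmin
  have huU : u ∈ U := mem_of_mem_nhds hU
  obtain ⟨e, he⟩ := exists_dual_vectors hqual
  -- Strictly admissible directions: the half-line `u + t w` is feasible for small `t > 0`.
  have hstrict : ∀ w : V, (∀ i : {i : Fin M // F i u = 0}, F' i u w < 0) → 0 ≤ J' u w := by
    intro w hw
    by_contra! hJw
    have hline : Tendsto (fun t : ℝ => u + t • w) (𝓝[>] 0) (𝓝 u) := by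
      have : Continuous (fun t : ℝ => u + t • w) := by fun_prop
      simpa using (this.tendsto 0).mono_left nhdsWithin_le_nhds
    have hfeas : ∀ᶠ t : ℝ in 𝓝[>] 0, ∀ i, F i (u + t • w) ≤ 0 := by
      rw [eventually_all]
      intro i
      rcases (hFu i).eq_or_lt with h | h
      · filter_upwards [eventually_lt_of_fderiv_neg (hFd i u huU) (hw ⟨i, h⟩)] with t ht
        exact (ht.trans_eq h).le
      · have := ((hFd i u huU).continuousAt.tendsto.comp hline).eventually_lt_const h
        filter_upwards [this] with t ht using ht.le
    have hnear : ∀ᶠ t : ℝ in 𝓝[>] 0, u + t • w ∈ Metric.ball u δ :=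
      hline (Metric.ball_mem_nhds u hδ)
    obtain ⟨t, ht1, ht2, ht3⟩ :=
      (hfeas.and (hnear.and (eventually_lt_of_fderiv_neg (hJd u huU) hJw))).exists
    exact (hmin _ ht1 (mem_ball_iff_norm.1 ht2)).not_gt ht3
  have hweak : ∀ w : V, (∀ i : {i : Fin M // F i u = 0}, F' i u w ≤ 0) → 0 ≤ J' u w := by
    intro w hw
    have hlim : Tendsto (fun ε : ℝ => J' u (w - ε • ∑ j, e j)) (𝓝[>] 0) (𝓝 (J' u w)) := by
      have : Continuous (fun ε : ℝ => J' u (w - ε • ∑ j, e j)) := by fun_prop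
      simpa using (this.tendsto 0).mono_left nhdsWithin_le_nhds
    refine ge_of_tendsto hlim ?_
    filter_upwards [self_mem_nhdsWithin] with ε hε
    have hε : 0 < ε := hε
    apply hstrict
    intro i
    have : F' i u (∑ j, e j) = 1 := by simp [map_sum, he]
    rw [map_sub, map_smul, this, smul_eq_mul, mul_one]
    linarith [hw i]
  have hker : ∀ w : V, (∀ i : {i : Fin M // F i u = 0}, F' i u w = 0) → J' u w = 0 := by
    intro w hw
    have h1 := hweak w fun i => (hw i).le
    have h2 := hweak (-w) fun i => by simp [hw i]
    rw [map_neg] at h2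
    linarith
  refine ⟨fun i => if h : F i u = 0 then J' u (-e ⟨i, h⟩) else 0, fun i => ?_, ?_, fun i hi => ?_⟩
  · dsimp only
    split_ifs with h
    · apply hweak
      intro k
      rw [map_neg, he]
      split_ifs <;> norm_num
    · exact le_rfl
  · ext v
    have hv := hker (v - ∑ j : {i : Fin M // F i u = 0}, F' j u v • e j) fun i => by
      simp [map_sum, he]
    -- The sum over all constraints reduces to the sum over the active ones.
    have hsum : ∑ i, (if h : F i u = 0 then J' u (-e ⟨i, h⟩) else 0) * F' i u v
        = ∑ j : {i : Fin M // F i u = 0}, J' u (-e j) * F' j u v := by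
      have hzero : ∑ i : {i : Fin M // ¬ F i u = 0},
          (if h : F i u = 0 then J' u (-e ⟨i, h⟩) else 0) * F' i u v = 0 :=
        Finset.sum_eq_zero fun i _ => by rw [dif_neg i.2, zero_mul]
      rw [← Fintype.sum_subtype_add_sum_subtype (fun i => F i u = 0), hzero, add_zero]
      exact Finset.sum_congr rfl fun j _ => by rw [dif_pos j.2]
    simp only [map_sub, map_sum, map_smul, smul_eq_mul] at hv
    simp only [add_apply, sum_apply, smul_apply, zero_apply, smul_eq_mul]
    rw [hsum]
    simp only [map_neg, neg_mul, Finset.sum_neg_distrib]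
    simp only [mul_comm (J' u _)]
    linarith
  · exact dif_neg hi.ne
end
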